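/- Assume r, r': {0,1}* → {0,1}* are κ-eventually definable and κ'-eventually definable, respectively, that κ'(r(x)) ≤ f(κ(x)) for some computable f: ℕ → ℕ, and that r is honest. Then r' ∘ r is κ-eventually definable. (Lemma 3.3) -/

import Mathlib

/-! # Framework: strings, pairing, Turing machines, circuits, complexity classes -/

namespace PFW

/-- Binary strings `{0,1}*`. -/
abbrev Str := List Bool

/-- The string `1^n`. -/
def unary (n : ℕ) : Str := List.replicate n true

/-- The binary representation of a natural number, as a string. -/
def natStr (n : ℕ) : Str := Nat.bits n

/-- `num(x)`: the natural number whose binary expansion is `1x`. -/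
def strNum (x : Str) : ℕ := x.foldl (fun a b => 2 * a + cond b 1 0) 1

/-- Duplicate every bit. -/
def dbl (x : Str) : Str := x.foldr (fun b r => b :: b :: r) []

/-- The pairing `⟨x,y⟩ = x₀x₀…x_{|x|-1}x_{|x|-1} 01 y₀y₀…y_{|y|-1}y_{|y|-1}`. -/
def pairStr (x y : Str) : Str := dbl x ++ [false, true] ++ dbl y

/-- Inverse of bit duplication. -/
def undbl : Str → Option Str
  | [] => some []
  | [_] => none
  | a :: b :: r => if a = b then (undbl r).map (a :: ·) else none

/-- Parse a string of the form `⟨x,y⟩` into `(x, y)`. -/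
def splitPair : Str → Option (Str × Str)
  | [] => none
  | [_] => none
  | a :: b :: r =>
    if a = b then (splitPair r).map (fun p => (a :: p.1, p.2))
    else if a = false then (undbl r).map (fun y => (([] : Str), y))
    else none

/-- The parameterization mapping a string of the form `⟨1^n, y⟩` to `|y|`
    and all other strings to `0`. -/
def tallyFstParam (x : Str) : ℕ :=
  match splitPair x with
  | some (u, y) => if u.all (fun b => b) then y.length else 0
  | none => 0

/-! ## Turing machines (single tape, alphabet {0,1} plus blank) -/

/-- Head movements. -/
inductive Move where
  | L | R | S
deriving DecidableEq

def Move.apply : Move → ℤ → ℤ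
  | .L, p => p - 1
  | .R, p => p + 1
  | .S, p => p

/-- A transition: in state `src` reading `read`, go to state `dst`,
    write `write` and move the head. -/
structure MTrans where
  src : ℕ
  read : Option Bool
  dst : ℕ
  write : Option Bool
  move : Move

/-- A nondeterministic Turing machine (start state `0`). -/
structure NTM where
  states : ℕ
  accept : ℕ
  trans : List MTrans

/-- A configuration: state, head position and tape content. -/
structure Cfg where
  state : ℕ
  pos : ℤ
  tape : ℤ → Option Bool

/-- The tape holding input `x`. -/
def inputTape (x : Str) : ℤ → Option Bool :=
  fun i => if 0 ≤ i ∧ i < (x.length : ℤ) then x[i.toNat]? else none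

/-- The start configuration on input `x`. -/
def initCfg (x : Str) : Cfg := ⟨0, 0, inputTape x⟩

/-- One computation step. -/
def NTM.Step (M : NTM) (c c' : Cfg) : Prop :=
  ∃ t ∈ M.trans, t.src = c.state ∧ t.read = c.tape c.pos ∧
    c' = ⟨t.dst, t.move.apply c.pos, Function.update c.tape c.pos t.write⟩

/-- `f` is a run of length `n` of `M`. -/
def NTM.RunFrom (M : NTM) (f : ℕ → Cfg) (n : ℕ) : Prop := ∀ i < n, M.Step (f i) (f (i + 1))

/-- `M` accepts input `x` in exactly `n` steps. -/
def NTM.AcceptsExactly (M : NTM) (x : Str) (n : ℕ) : Prop :=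
  ∃ f : ℕ → Cfg, f 0 = initCfg x ∧ M.RunFrom f n ∧ (f n).state = M.accept

/-- `M` accepts input `x` in at most `n` steps. -/
def NTM.AcceptsIn (M : NTM) (x : Str) (n : ℕ) : Prop := ∃ m ≤ n, M.AcceptsExactly x m

/-- `M` is deterministic. -/
def NTM.Deterministic (M : NTM) : Prop := ∀ c c₁ c₂, M.Step c c₁ → M.Step c c₂ → c₁ = c₂

/-- Binary encoding of a machine. -/
def Move.code : Move → ℕ | .L => 0 | .R => 1 | .S => 2

def MTrans.code (t : MTrans) : ℕ :=
  Encodable.encode (t.src, t.read, t.dst, t.write, t.move.code)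

def NTM.code (M : NTM) : Str :=
  natStr (Encodable.encode (M.states, M.accept, M.trans.map MTrans.code))

/-- `|M|`, the size of a machine. -/
def NTM.size (M : NTM) : ℕ := M.code.length

/-- A deterministic machine computes output `y` from input `x` in `t` steps:
    it halts in the accepting state, head at position 0, with `y` on the tape. -/
def NTM.ComputesIn (M : NTM) (x y : Str) (t : ℕ) : Prop :=
  ∃ f : ℕ → Cfg, f 0 = initCfg x ∧ M.RunFrom f t ∧ (f t).state = M.accept ∧
    (f t).pos = 0 ∧ (f t).tape = inputTape y

/-- `F` is computable in polynomial time. -/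
def PolyTimeFun (F : Str → Str) : Prop :=
  ∃ M : NTM, M.Deterministic ∧ ∃ c : ℕ,
    ∀ x : Str, ∃ t ≤ c * (x.length + 1) ^ c, M.ComputesIn x (F x) t

/-- A parameterization `κ : {0,1}* → ℕ` is polynomial time computable
    (the value is produced in binary). -/
def PolyTimeParam (κ : Str → ℕ) : Prop := PolyTimeFun (fun x => natStr (κ x))

/-! ## Classical complexity classes -/

/-- `Q ∈ NP`. -/
def InNP (Q : Set Str) : Prop :=
  ∃ M : NTM, ∃ c : ℕ, ∀ x : Str, x ∈ Q ↔ M.AcceptsIn x (c * (x.length + 1) ^ c)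

/-- `Q ∈ NE`: nondeterministic time `2^{O(n)}`. -/
def InNE (Q : Set Str) : Prop :=
  ∃ M : NTM, ∃ c : ℕ, ∀ x : Str, x ∈ Q ↔ M.AcceptsIn x (2 ^ (c * (x.length + 1)))

/-- `Q ∈ E`: deterministic time `2^{O(n)}`. -/
def InE (Q : Set Str) : Prop :=
  ∃ M : NTM, M.Deterministic ∧ ∃ c : ℕ, ∀ x : Str, x ∈ Q ↔ M.AcceptsIn x (2 ^ (c * (x.length + 1)))

/-! ## Alternating machines and the linear time hierarchy -/

/-- An alternating Turing machine: a machine together with a labelling of the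
    states as universal (`true`) or existential (`false`). -/
structure ATM where
  toNTM : NTM
  universal : ℕ → Bool

/-- `M.Acc t a c`: starting from configuration `c`, the alternating machine `M`
    accepts within `t` steps using at most `a` alternations. -/
def ATM.Acc (M : ATM) : ℕ → ℕ → Cfg → Prop
  | 0, _, c => c.state = M.toNTM.accept
  | t + 1, a, c =>
    c.state = M.toNTM.accept ∨
      (if M.universal c.state then
        (∃ c', M.toNTM.Step c c') ∧
          ∀ c', M.toNTM.Step c c' →
            (if M.universal c'.state = M.universal c.state then ATM.Acc M t a c'
             else a ≠ 0 ∧ ATM.Acc M t (a - 1) c')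
       else
        ∃ c', M.toNTM.Step c c' ∧
          (if M.universal c'.state = M.universal c.state then ATM.Acc M t a c'
           else a ≠ 0 ∧ ATM.Acc M t (a - 1) c'))

/-- `Q` is accepted by an alternating machine in linear time with
    at most `a` alternations. -/
def InLINHBounded (a : ℕ) (Q : Set Str) : Prop :=
  ∃ M : ATM, ∃ c : ℕ, ∀ x : Str, x ∈ Q ↔ M.Acc (c * (x.length + 1)) a (initCfg x)

/-- `Q ∈ LINH`: the linear time hierarchy. -/
def InLINH (Q : Set Str) : Prop := ∃ a : ℕ, InLINHBounded a Q

/-! ## Space bounded machines (read-only input tape plus a work tape) -/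

structure OTrans where
  src : ℕ
  readIn : Option Bool
  readWork : Option Bool
  dst : ℕ
  moveIn : Move
  writeWork : Option Bool
  moveWork : Move

/-- A (nondeterministic) machine with a read-only input tape and one work tape. -/
structure OTM where
  states : ℕ
  accept : ℕ
  trans : List OTrans

structure OCfg where
  state : ℕ
  inPos : ℤ
  workPos : ℤ
  work : ℤ → Option Bool

def OTM.Step (M : OTM) (x : Str) (c c' : OCfg) : Prop :=
  ∃ t ∈ M.trans, t.src = c.state ∧ t.readIn = inputTape x c.inPos ∧
    t.readWork = c.work c.workPos ∧
    c' = ⟨t.dst, t.moveIn.apply c.inPos, t.moveWork.apply c.workPos,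
          Function.update c.work c.workPos t.writeWork⟩

def OTM.initCfg : OCfg := ⟨0, 0, 0, fun _ => none⟩

/-- `M` accepts `x` using work space at most `s`. -/
def OTM.AcceptsSpace (M : OTM) (x : Str) (s : ℕ) : Prop :=
  ∃ n : ℕ, ∃ f : ℕ → OCfg, f 0 = OTM.initCfg ∧ (∀ i < n, M.Step x (f i) (f (i + 1))) ∧
    (f n).state = M.accept ∧ ∀ i ≤ n, (f i).workPos.natAbs ≤ s

def OTM.Deterministic (M : OTM) : Prop :=
  ∀ x c c₁ c₂, M.Step x c c₁ → M.Step x c c₂ → c₁ = c₂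

/-- `Q ∈ NLINSPACE`. -/
def InNLINSP (Q : Set Str) : Prop :=
  ∃ M : OTM, ∃ c : ℕ, ∀ x : Str, x ∈ Q ↔ M.AcceptsSpace x (c * (x.length + 1))

/-- `Q ∈ LINSPACE`. -/
def InLINSP (Q : Set Str) : Prop :=
  ∃ M : OTM, M.Deterministic ∧ ∃ c : ℕ, ∀ x : Str, x ∈ Q ↔ M.AcceptsSpace x (c * (x.length + 1))

/-! ## Parameterized classes defined by machines -/

/-- `(Q,κ) ∈ para-NP`. -/
def InParaNP (Q : Set Str) (κ : Str → ℕ) : Prop :=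
  PolyTimeParam κ ∧
  ∃ M : NTM, ∃ f : ℕ → ℕ, Computable f ∧ ∃ c : ℕ,
    ∀ x : Str, x ∈ Q ↔ M.AcceptsIn x (f (κ x) * (x.length + 1) ^ c)

/-- `(Q,κ) ∈ FPT = para-P`. -/
def InFPT (Q : Set Str) (κ : Str → ℕ) : Prop :=
  PolyTimeParam κ ∧
  ∃ M : NTM, M.Deterministic ∧ ∃ f : ℕ → ℕ, Computable f ∧ ∃ c : ℕ,
    ∀ x : Str, x ∈ Q ↔ M.AcceptsIn x (f (κ x) * (x.length + 1) ^ c)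

/-- `(Q,κ) ∈ para-NL`: nondeterministic space `f(κ(x)) + O(log |x|)`. -/
def InParaNL (Q : Set Str) (κ : Str → ℕ) : Prop :=
  PolyTimeParam κ ∧
  ∃ M : OTM, ∃ f : ℕ → ℕ, Computable f ∧ ∃ c : ℕ,
    ∀ x : Str, x ∈ Q ↔ M.AcceptsSpace x (f (κ x) + c * (Nat.log 2 (x.length + 1) + 1))

/-- `(Q,κ) ∈ para-L`: deterministic space `f(κ(x)) + O(log |x|)`. -/
def InParaL (Q : Set Str) (κ : Str → ℕ) : Prop :=
  PolyTimeParam κ ∧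
  ∃ M : OTM, M.Deterministic ∧ ∃ f : ℕ → ℕ, Computable f ∧ ∃ c : ℕ,
    ∀ x : Str, x ∈ Q ↔ M.AcceptsSpace x (f (κ x) + c * (Nat.log 2 (x.length + 1) + 1))

/-! ## Circuits -/

/-- A gate of a circuit: an input bit, a constant, or a `¬`, `∧`, `∨` gate
    (with unbounded fan-in for `∧` and `∨`) whose arguments are
    references to previous gates. -/
inductive Gate where
  | input (i : ℕ)
  | const (b : Bool)
  | not (j : ℕ)
  | and (js : List ℕ)
  | or (js : List ℕ)

/-- A circuit is a list of gates, each one referring to earlier gates;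
    its output is the value of the last gate. -/
structure Circuit where
  gates : List Gate

/-- Value of a gate, given the input string and the values of earlier gates. -/
def Gate.val (x : Str) (vs : List Bool) : Gate → Bool
  | .input i => x.getD i false
  | .const b => b
  | .not j => !(vs.getD j false)
  | .and js => js.all fun j => vs.getD j false
  | .or js => js.any fun j => vs.getD j false

def Circuit.vals (C : Circuit) (x : Str) : List Bool :=
  C.gates.foldl (fun vs g => vs ++ [g.val x vs]) []

/-- Evaluate a circuit on an input string. -/
def Circuit.eval (C : Circuit) (x : Str) : Bool := (C.vals x).getLast?.getD false

/-- Depth contribution of a gate (as usual, negations do not count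
    towards the depth). -/
def Gate.dep (ds : List ℕ) : Gate → ℕ
  | .input _ => 0
  | .const _ => 0
  | .not j => ds.getD j 0
  | .and js => (js.map fun j => ds.getD j 0).foldr max 0 + 1
  | .or js => (js.map fun j => ds.getD j 0).foldr max 0 + 1

/-- The depth of a circuit. -/
def Circuit.depth (C : Circuit) : ℕ :=
  (C.gates.foldl (fun ds g => ds ++ [g.dep ds]) []).foldr max 0

def Gate.fanin : Gate → ℕ
  | .and js => js.length
  | .or js => js.length
  | .not _ => 1
  | _ => 0

/-- The size of a circuit: number of gates plus number of wires. -/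
def Circuit.size (C : Circuit) : ℕ := C.gates.length + (C.gates.map Gate.fanin).sum

def Gate.code : Gate → ℕ
  | .input i => Nat.pair 0 i
  | .const b => Nat.pair 1 (cond b 1 0)
  | .not j => Nat.pair 2 j
  | .and js => Nat.pair 3 (Encodable.encode js)
  | .or js => Nat.pair 4 (Encodable.encode js)

/-- The binary encoding of a circuit. -/
def Circuit.code (C : Circuit) : Str := natStr (Encodable.encode (C.gates.map Gate.code))

/-- The input `⟨n, 1^k, i, b⟩` (with `n` and `i` in binary) for the machine
    checking the encoding of the circuit family. -/
def uniInput2 (n k i : ℕ) (b : Bool) : Str :=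
  pairStr (natStr n) (pairStr (unary k) (pairStr (natStr i) [b]))

/-- dlogtime-style uniformity of a parameterized circuit family: a deterministic
    Turing machine decides in time `g(k) + O(log n)` whether the `i`-th bit of
    the binary encoding of `C_{n,k}` is `b`. -/
def UniformFamily2 (C : ℕ → ℕ → Circuit) : Prop :=
  ∃ M : NTM, M.Deterministic ∧ ∃ g : ℕ → ℕ, Computable g ∧ ∃ e : ℕ,
    ∀ n k i b, ((C n k).code[i]? = some b ↔
      M.AcceptsIn (uniInput2 n k i b) (g k + e * (Nat.log 2 (n + 1) + 1)))

/-- `(Q,κ) ∈ para-AC⁰`: a uniform family `(C_{n,k})` of circuits of constant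
    depth and size `f(k)·n^{O(1)}` (`f` computable) deciding `Q`. -/
def InParaAC0 (Q : Set Str) (κ : Str → ℕ) : Prop :=
  PolyTimeParam κ ∧
  ∃ C : ℕ → ℕ → Circuit, ∃ f : ℕ → ℕ, Computable f ∧ ∃ c d : ℕ,
    (∀ n k, (C n k).size ≤ f k * (n + 1) ^ c ∧ (C n k).depth ≤ d) ∧
    (∀ x : Str, x ∈ Q ↔ (C x.length (κ x)).eval x = true) ∧
    UniformFamily2 C

def uniInput1 (n i : ℕ) (b : Bool) : Str := pairStr (natStr n) (pairStr (natStr i) [b])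

/-- dlogtime-style uniformity of a circuit family. -/
def UniformFamily1 (C : ℕ → Circuit) : Prop :=
  ∃ M : NTM, M.Deterministic ∧ ∃ e : ℕ,
    ∀ n i b, ((C n).code[i]? = some b ↔
      M.AcceptsIn (uniInput1 n i b) (e * (Nat.log 2 (n + 1) + 1)))

/-- `Q ∈ AC⁰` (dlogtime uniform). -/
def InAC0 (Q : Set Str) : Prop :=
  ∃ C : ℕ → Circuit, ∃ c d : ℕ,
    (∀ n, (C n).size ≤ (n + 1) ^ c ∧ (C n).depth ≤ d) ∧
    (∀ x : Str, x ∈ Q ↔ (C x.length).eval x = true) ∧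
    UniformFamily1 C

/-- `Q ∈ AC⁰_d`: dlogtime uniform polynomial size circuits of depth at most `d`. -/
def InAC0Depth (d : ℕ) (Q : Set Str) : Prop :=
  ∃ C : ℕ → Circuit, ∃ c : ℕ,
    (∀ n, (C n).size ≤ (n + 1) ^ c ∧ (C n).depth ≤ d) ∧
    (∀ x : Str, x ∈ Q ↔ (C x.length).eval x = true) ∧
    UniformFamily1 C

/-! ## The parameterized halting problems -/

/-- `p-Halt`: instances `⟨1^n, M⟩`, question: does the nondeterministic machine
    `M` accept the empty input in at most `n` steps? -/
def pHaltQ : Set Str :=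
  { z | ∃ (n : ℕ) (M : NTM), z = pairStr (unary n) M.code ∧ ∃ m ≤ n, M.AcceptsExactly [] m }

/-- `p-Halt₌`: instances `⟨1^n, M⟩`, question: does the nondeterministic machine
    `M` accept the empty input in exactly `n` steps? -/
def pHaltEqQ : Set Str :=
  { z | ∃ (n : ℕ) (M : NTM), z = pairStr (unary n) M.code ∧ M.AcceptsExactly [] n }

/-- `p-DHalt`: as `p-Halt` but with deterministic machines. -/
def pDHaltQ : Set Str :=
  { z | ∃ (n : ℕ) (M : NTM), z = pairStr (unary n) M.code ∧ M.Deterministic ∧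
        ∃ m ≤ n, M.AcceptsExactly [] m }

/-- The parameterization `⟨1^n, M⟩ ↦ |M|` of the halting problems. -/
def haltParam : Str → ℕ := tallyFstParam

/-- `(Q,κ)` is almost tally: instances have the form `⟨1^n, x⟩` with `|x|`
    effectively bounded in the parameter. -/
def AlmostTally (Q : Set Str) (κ : Str → ℕ) : Prop :=
  (∀ z ∈ Q, ∃ (n : ℕ) (x : Str), z = pairStr (unary n) x) ∧
  ∃ f : ℕ → ℕ, Computable f ∧ ∀ (n : ℕ) (x : Str), x.length ≤ f (κ (pairStr (unary n) x))

end PFW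

/-! # String structures, the language `L^r_ar ∪ {ONE}`, interpretations -/

namespace PFW

open FirstOrder

/-- Function symbols of `L^r_ar ∪ {ONE}`: the constants `0` and `1`. -/
inductive LOneFun : ℕ → Type
  | zero : LOneFun 0
  | one : LOneFun 0

/-- Relation symbols of `L^r_ar ∪ {ONE}`: the unary `ONE`, the binary `<` and
    the ternary graphs of `+` and `×`. -/
inductive LOneRel : ℕ → Type
  | one : LOneRel 1
  | lt : LOneRel 2
  | add : LOneRel 3
  | mul : LOneRel 3

/-- The relational language `L^r_ar ∪ {ONE}` of string structures. -/
def LOne : FirstOrder.Language := ⟨LOneFun, LOneRel⟩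

/-- The size of the universe of the string structure `S(x)` (we pad to `2` to
    keep the structure total; for `|x| ≥ 2` it is exactly `|x|`). -/
def strLen (x : Str) : ℕ := max x.length 2

theorem two_le_strLen (x : Str) : 2 ≤ strLen x := Nat.le_max_right _ _

/-- The string structure `S(x) = ([n], +^n, ×^n, 0, 1, <, ONE^x)`, `n = |x|`. -/
def strStructure (x : Str) : LOne.Structure (Fin (strLen x)) where
  funMap := fun {n} f _ =>
    match f with
    | .zero => ⟨0, by have := two_le_strLen x; omega⟩
    | .one => ⟨1, by have := two_le_strLen x; omega⟩
  RelMap := fun {n} R v =>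
    match R, v with
    | .one, v => x.getD (v 0).val false = true
    | .lt, v => (v 0).val < (v 1).val
    | .add, v => (v 0).val + (v 1).val = (v 2).val
    | .mul, v => (v 0).val * (v 1).val = (v 2).val

/-- `S(x) ⊨ φ`. -/
def strSat (x : Str) (φ : LOne.Sentence) : Prop :=
  letI := strStructure x
  FirstOrder.Language.Sentence.Realize (Fin (strLen x)) φ

/-- A first-order interpretation (of `L^r_ar ∪ {ONE}` in itself) of width `w`. -/
structure Interp where
  w : ℕ
  uni : LOne.Formula (Fin w)
  addF : LOne.Formula (Fin w ⊕ Fin w ⊕ Fin w)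
  mulF : LOne.Formula (Fin w ⊕ Fin w ⊕ Fin w)
  ltF : LOne.Formula (Fin w ⊕ Fin w)
  oneR : LOne.Formula (Fin w)
  zeroC : LOne.Formula (Fin w)
  oneC : LOne.Formula (Fin w)

/-- The universe defined by the interpretation `I` inside `S(x)`. -/
def Interp.Dom (I : Interp) (x : Str) : Type :=
  { a : Fin I.w → Fin (strLen x) //
      letI := strStructure x
      I.uni.Realize a }

/-- `I.Models x y` says that the interpreted structure `S(x)^I` is defined and
    isomorphic to the string structure `S(y)`. -/
def Interp.Models (I : Interp) (x y : Str) : Prop :=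
  letI := strStructure x
  ∃ e : I.Dom x ≃ Fin (strLen y),
    (∀ u v w : I.Dom x,
       I.addF.Realize (Sum.elim u.1 (Sum.elim v.1 w.1)) ↔
         (e u).val + (e v).val = (e w).val) ∧
    (∀ u v w : I.Dom x,
       I.mulF.Realize (Sum.elim u.1 (Sum.elim v.1 w.1)) ↔
         (e u).val * (e v).val = (e w).val) ∧
    (∀ u v : I.Dom x, I.ltF.Realize (Sum.elim u.1 v.1) ↔ (e u).val < (e v).val) ∧
    (∀ u : I.Dom x, I.oneR.Realize u.1 ↔ y.getD (e u).val false = true) ∧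
    (∀ u : I.Dom x, I.zeroC.Realize u.1 ↔ (e u).val = 0) ∧
    (∀ u : I.Dom x, I.oneC.Realize u.1 ↔ (e u).val = 1)

/-- `r` is `κ`-eventually definable: for some computable `h` and some
    interpretation `I`, `S(x)^I ≅ S(r(x))` whenever `|x| ≥ h(κ(x))`. -/
def EventuallyDefinable (κ : Str → ℕ) (r : Str → Str) : Prop :=
  ∃ h : ℕ → ℕ, Computable h ∧ ∃ I : Interp,
    ∀ x : Str, h (κ x) ≤ x.length → I.Models x (r x)

/-- `r` is honest: `|r(x)| ≥ |x|^{Ω(1)}`. -/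
def Honest (r : Str → Str) : Prop :=
  ∃ (c n₀ : ℕ), 0 < c ∧ ∀ x : Str, n₀ ≤ x.length → x.length ≤ (r x).length ^ c

/-- An eventually definable reduction from `(Q,κ)` to `(Q',κ')`: a reduction
    which is honest, parameterized, and `κ`-eventually definable. -/
def EDReduction (Q : Set Str) (κ : Str → ℕ) (Q' : Set Str) (κ' : Str → ℕ)
    (r : Str → Str) : Prop :=
  (∀ x : Str, x ∈ Q ↔ r x ∈ Q') ∧
  Honest r ∧
  (∃ f : ℕ → ℕ, Computable f ∧ ∀ x : Str, κ' (r x) ≤ f (κ x)) ∧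
  EventuallyDefinable κ r

/-- `(Q,κ)` is eventually definable: for some computable `h` and first-order
    sentence `φ` of `L^r_ar ∪ {ONE}`, for all `x` with `|x| ≥ h(κ(x))` (and
    `|x| ≥ 2`): `x ∈ Q ⟺ S(x) ⊨ φ`. -/
def EventuallyDefinableProblem (Q : Set Str) (κ : Str → ℕ) : Prop :=
  ∃ h : ℕ → ℕ, Computable h ∧ ∃ φ : LOne.Sentence,
    ∀ x : Str, 2 ≤ x.length → h (κ x) ≤ x.length → (x ∈ Q ↔ strSat x φ)

end PFW

namespace PFW

open FirstOrder.Language (Term Formula BoundedFormula)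

/-- The formula of `I` interpreting the constant symbol `f`. -/
def Interp.constF (I : Interp) {k : ℕ} : LOneFun k → LOne.Formula (Fin I.w)
  | .zero => I.zeroC
  | .one => I.oneC

/-- The formula of `I` interpreting the relation symbol `R`, with the variables arranged as a
    tuple of `I.w`-tuples. -/
def Interp.relF (I : Interp) {k : ℕ} : LOneRel k → LOne.Formula (Fin k × Fin I.w)
  | .one => I.oneR.relabel (fun i => (0, i))
  | .lt => I.ltF.relabel (Sum.elim (fun i => (0, i)) (fun i => (1, i)))
  | .add => I.addF.relabel
      (Sum.elim (fun i => (0, i)) (Sum.elim (fun i => (1, i)) (fun i => (2, i))))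
  | .mul => I.mulF.relabel
      (Sum.elim (fun i => (0, i)) (Sum.elim (fun i => (1, i)) (fun i => (2, i))))

/-- A family of tuples, as an assignment of the pairs (index, coordinate). -/
def flatten {β M : Type*} {w : ℕ} {P : (Fin w → M) → Prop} (u : β → {a // P a}) : β × Fin w → M :=
  fun p => (u p.1).1 p.2

/-- `e` is an isomorphism from the structure defined by `I` inside `M` onto `N`. -/
structure Interp.IsIso (I : Interp) {M N : Type} [LOne.Structure M] [LOne.Structure N]
    (e : {a : Fin I.w → M // I.uni.Realize a} ≃ N) : Prop where
  const : ∀ {k : ℕ} (f : LOneFun k) (u : {a : Fin I.w → M // I.uni.Realize a}) (v : Fin k → N),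
    (I.constF f).Realize u.1 ↔
      FirstOrder.Language.Structure.funMap (L := LOne) (f : LOne.Functions k) v = e u
  rel : ∀ {k : ℕ} (R : LOneRel k) (u : Fin k → {a : Fin I.w → M // I.uni.Realize a}),
    (I.relF R).Realize (flatten u) ↔
      FirstOrder.Language.Structure.RelMap (L := LOne) (R : LOne.Relations k) (e ∘ u)

/-- The graph of a term, evaluated in the structure defined by `I`. -/
noncomputable def Interp.termGraph (I : Interp) {β : Type} :
    LOne.Term β → LOne.Formula (β × Fin I.w ⊕ Fin I.w)
  | .var v => Formula.iInf fun i => Term.equal (.var (.inl (v, i))) (.var (.inr i))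
  | .func f _ => (I.constF f).relabel Sum.inr

/-- Turn the last quantified tuple into a block of new variables. -/
def splitLast {α : Type} {n w : ℕ} (p : (α ⊕ Fin (n + 1)) × Fin w) :
    (α ⊕ Fin n) × Fin w ⊕ Fin w :=
  Sum.elim (fun a => .inl (.inl a, p.2))
    (Fin.lastCases (.inr p.2) (fun j => .inl (.inr j, p.2))) p.1

/-- The formula expressing in `M` that `φ` holds in the structure defined by `I` inside `M`. -/
noncomputable def Interp.pullBounded (I : Interp) {α : Type} :
    {n : ℕ} → LOne.BoundedFormula α n → LOne.Formula ((α ⊕ Fin n) × Fin I.w)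
  | _, .falsum => ⊥
  | _, .equal t s =>
      Formula.iExs (Fin I.w) (I.uni.relabel Sum.inr ⊓ (I.termGraph t ⊓ I.termGraph s))
  | _, .rel (l := k) R ts =>
      Formula.iExs (Fin k × Fin I.w)
        ((Formula.iInf fun j : Fin k => I.uni.relabel (fun i => Sum.inr (j, i)) ⊓
            (I.termGraph (ts j)).relabel (Sum.map id (fun i => (j, i)))) ⊓
          (I.relF R).relabel Sum.inr)
  | _, .imp φ ψ => (I.pullBounded φ).imp (I.pullBounded ψ)
  | _, .all φ =>
      Formula.iAlls (Fin I.w)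
        ((I.uni.relabel Sum.inr).imp ((I.pullBounded φ).relabel splitLast))

/-- The translation of a formula along the interpretation `I`. -/
noncomputable def Interp.pull (I : Interp) {α : Type} (φ : LOne.Formula α) :
    LOne.Formula (α × Fin I.w) :=
  (I.pullBounded φ).relabel (Prod.map (Sum.elim id finZeroElim) id)

section Translation

variable {I : Interp} {M N : Type} [LOne.Structure M] [LOne.Structure N]
  {e : {a : Fin I.w → M // I.uni.Realize a} ≃ N}

theorem Interp.IsIso.realize_termGraph (he : I.IsIso e) {β : Type} (t : LOne.Term β)
    (u : β → {a : Fin I.w → M // I.uni.Realize a})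
    (z : {a : Fin I.w → M // I.uni.Realize a}) :
    (I.termGraph t).Realize (Sum.elim (flatten u) z.1) ↔ t.realize (e ∘ u) = e z := by
  cases t with
  | var v =>
    simp [Interp.termGraph, flatten, Subtype.ext_iff, funext_iff]
  | func f ts =>
    rw [Interp.termGraph, Formula.realize_relabel, Sum.elim_comp_inr]
    exact he.const f z _

theorem Interp.IsIso.realize_pullBounded (he : I.IsIso e) {α : Type} {n : ℕ}
    (φ : LOne.BoundedFormula α n)
    (u : α ⊕ Fin n → {a : Fin I.w → M // I.uni.Realize a}) :
    (I.pullBounded φ).Realize (flatten u) ↔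
      φ.Realize (e ∘ u ∘ Sum.inl) (e ∘ u ∘ Sum.inr) := by
  have helim : ∀ {n : ℕ} (u : α ⊕ Fin n → {a : Fin I.w → M // I.uni.Realize a}),
      Sum.elim (e ∘ u ∘ Sum.inl) (e ∘ u ∘ Sum.inr) = e ∘ u := by
    intro n u
    funext p
    cases p <;> rfl
  induction φ with
  | falsum => rfl
  | equal t s =>
    simp only [Interp.pullBounded, Formula.realize_iExs, Formula.realize_inf,
      Formula.realize_relabel, Sum.elim_comp_inr, BoundedFormula.Realize, helim]
    constructor
    · rintro ⟨z, hz, ht, hs⟩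
      exact ((he.realize_termGraph t u ⟨z, hz⟩).1 ht).trans
        ((he.realize_termGraph s u ⟨z, hz⟩).1 hs).symm
    · intro h
      refine ⟨(e.symm (t.realize (e ∘ u))).1, (e.symm _).2, ?_, ?_⟩
      · exact (he.realize_termGraph t u _).2 (by simp)
      · exact (he.realize_termGraph s u _).2 (by simp [h])
  | rel R ts =>
    simp only [Interp.pullBounded, Formula.realize_iExs, Formula.realize_inf,
      Formula.realize_iInf, Formula.realize_relabel, Sum.elim_comp_inr, BoundedFormula.Realize,
      helim]
    constructor
    · rintro ⟨z, hz, hR⟩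
      let c : Fin _ → {a : Fin I.w → M // I.uni.Realize a} :=
        fun j => ⟨fun i => z (j, i), (hz j).1⟩
      have hc : ∀ j, (ts j).realize (e ∘ u) = e (c j) := by
        intro j
        refine (he.realize_termGraph (ts j) u (c j)).1 ?_
        convert (hz j).2 using 1
        funext p
        cases p <;> rfl
      rw [funext hc]
      exact (he.rel R c).1 hR
    · intro h
      let c : Fin _ → {a : Fin I.w → M // I.uni.Realize a} :=
        fun j => e.symm ((ts j).realize (e ∘ u))
      refine ⟨flatten c, fun j => ⟨(c j).2, ?_⟩, (he.rel R c).2 ?_⟩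
      · convert (he.realize_termGraph (ts j) u (c j)).2 (by simp [c]) using 1
        funext p
        cases p <;> rfl
      · convert h using 1
        funext j
        simp [c]
  | imp φ ψ ihφ ihψ =>
    simp only [Interp.pullBounded, Formula.realize_imp, ihφ, ihψ, BoundedFormula.realize_imp]
  | all φ ih =>
    simp only [Interp.pullBounded, Formula.realize_iAlls, Formula.realize_imp,
      Formula.realize_relabel, BoundedFormula.realize_all]
    have key : ∀ z : {a : Fin I.w → M // I.uni.Realize a},
        (I.pullBounded φ).Realize (Sum.elim (flatten u) z.1 ∘ splitLast) ↔
          φ.Realize (e ∘ u ∘ Sum.inl) (Fin.snoc (e ∘ u ∘ Sum.inr) (e z)) := by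
      intro z
      have hz := ih (Sum.elim (u ∘ Sum.inl) (Fin.snoc (u ∘ Sum.inr) z))
      rw [Sum.elim_comp_inl, Sum.elim_comp_inr, Fin.comp_snoc] at hz
      convert hz using 2
      funext p
      obtain ⟨a | j, i⟩ := p
      · rfl
      · induction j using Fin.lastCases <;> simp [splitLast, flatten]
    constructor
    · intro h y
      have := (key (e.symm y)).1 (h _ (e.symm y).2)
      rwa [Equiv.apply_symm_apply] at this
    · intro h z hz
      exact (key ⟨z, hz⟩).2 (h _)

theorem Interp.IsIso.realize_pull (he : I.IsIso e) {α : Type} (φ : LOne.Formula α)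
    (u : α → {a : Fin I.w → M // I.uni.Realize a}) :
    (I.pull φ).Realize (flatten u) ↔ φ.Realize (e ∘ u) := by
  rw [Interp.pull, Formula.realize_relabel]
  convert he.realize_pullBounded φ (Sum.elim u finZeroElim) using 2
  · funext p
    obtain ⟨a | j, i⟩ := p
    · rfl
    · exact j.elim0
  · rw [Sum.elim_comp_inl]
    exact (Formula.boundedFormula_realize_eq_realize _ _ _).symm

end Translation

/-- The universe of the composition of two interpretations. -/
noncomputable def Interp.compUni (I I' : Interp) : LOne.Formula (Fin (I'.w * I.w)) :=
  (Formula.iInf fun j : Fin I'.w => I.uni.relabel (fun i => finProdFinEquiv (j, i))) ⊓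
    (I.pull I'.uni).relabel finProdFinEquiv

/-- The composition of two interpretations: `(S^I)^{I'} ≅ S^(I.comp I')`. -/
noncomputable def Interp.comp (I I' : Interp) : Interp where
  w := I'.w * I.w
  uni := I.compUni I'
  addF := (I.pull I'.addF).relabel (fun p => p.1.map (fun j => finProdFinEquiv (j, p.2))
    (Sum.map (fun j => finProdFinEquiv (j, p.2)) (fun j => finProdFinEquiv (j, p.2))))
  mulF := (I.pull I'.mulF).relabel (fun p => p.1.map (fun j => finProdFinEquiv (j, p.2))
    (Sum.map (fun j => finProdFinEquiv (j, p.2)) (fun j => finProdFinEquiv (j, p.2))))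
  ltF := (I.pull I'.ltF).relabel (fun p => p.1.map (fun j => finProdFinEquiv (j, p.2))
    (fun j => finProdFinEquiv (j, p.2)))
  oneR := (I.pull I'.oneR).relabel finProdFinEquiv
  zeroC := (I.pull I'.zeroC).relabel finProdFinEquiv
  oneC := (I.pull I'.oneC).relabel finProdFinEquiv

section Composition

variable {I : Interp} {M N : Type} [LOne.Structure M] [LOne.Structure N]
  {e : {a : Fin I.w → M // I.uni.Realize a} ≃ N}

/-- Cut an element of the domain of `I.comp I'` into elements of the domain of `I`. -/
def Interp.blocks (I' : Interp)
    (b : {b : Fin (I'.w * I.w) → M // (I.compUni I').Realize b}) (j : Fin I'.w) :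
    {a : Fin I.w → M // I.uni.Realize a} :=
  ⟨fun i => b.1 (finProdFinEquiv (j, i)), by
    have h := b.2
    simp only [Interp.compUni, Formula.realize_inf, Formula.realize_iInf,
      Formula.realize_relabel] at h
    exact h.1 j⟩

/-- The domain of `I.comp I'` inside `M` is the domain of `I'` inside `N`. -/
def Interp.IsIso.domEquiv (he : I.IsIso e) (I' : Interp) :
    {b : Fin (I'.w * I.w) → M // (I.compUni I').Realize b} ≃
      {c : Fin I'.w → N // I'.uni.Realize c} where
  toFun b := ⟨e ∘ Interp.blocks I' b, by
    have h := b.2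
    simp only [Interp.compUni, Formula.realize_inf, Formula.realize_iInf,
      Formula.realize_relabel] at h
    exact (he.realize_pull I'.uni (Interp.blocks I' b)).1 h.2⟩
  invFun c := ⟨flatten (e.symm ∘ c.1) ∘ finProdFinEquiv.symm, by
    simp only [Interp.compUni, Formula.realize_inf, Formula.realize_iInf,
      Formula.realize_relabel, Function.comp_assoc, Equiv.symm_comp_self, Function.comp_id]
    refine ⟨fun j => ?_, (he.realize_pull I'.uni (e.symm ∘ c.1)).2 ?_⟩
    · convert (e.symm (c.1 j)).2 using 1
      funext i
      simp [flatten]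
    · rw [← Function.comp_assoc, Equiv.self_comp_symm, Function.id_comp]
      exact c.2⟩
  left_inv b := by
    apply Subtype.ext
    funext i
    obtain ⟨p, rfl⟩ := finProdFinEquiv.surjective i
    simp [flatten, Interp.blocks]
  right_inv c := by
    apply Subtype.ext
    funext j
    simp only [Function.comp_apply]
    rw [← Equiv.eq_symm_apply]
    apply Subtype.ext
    funext i
    simp [flatten, Interp.blocks]

theorem Interp.IsIso.realize_pull_blocks (he : I.IsIso e) (I' : Interp)
    (φ : LOne.Formula (Fin I'.w))
    (b : {b : Fin (I'.w * I.w) → M // (I.compUni I').Realize b}) :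
    ((I.pull φ).relabel finProdFinEquiv).Realize b.1 ↔ φ.Realize (he.domEquiv I' b).1 := by
  rw [Formula.realize_relabel]
  exact he.realize_pull φ (Interp.blocks I' b)

theorem Interp.IsIso.realize_pull_blocks₂ (he : I.IsIso e) (I' : Interp)
    (φ : LOne.Formula (Fin I'.w ⊕ Fin I'.w))
    (b c : {b : Fin (I'.w * I.w) → M // (I.compUni I').Realize b}) :
    ((I.pull φ).relabel (fun p => p.1.map (fun j => finProdFinEquiv (j, p.2))
      (fun j => finProdFinEquiv (j, p.2)))).Realize (Sum.elim b.1 c.1) ↔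
      φ.Realize (Sum.elim (he.domEquiv I' b).1 (he.domEquiv I' c).1) := by
  rw [Formula.realize_relabel]
  convert he.realize_pull φ (Sum.elim (Interp.blocks I' b) (Interp.blocks I' c)) using 2
  · funext p
    obtain ⟨j | j, i⟩ := p <;> rfl
  · funext p
    cases p <;> rfl

theorem Interp.IsIso.realize_pull_blocks₃ (he : I.IsIso e) (I' : Interp)
    (φ : LOne.Formula (Fin I'.w ⊕ Fin I'.w ⊕ Fin I'.w))
    (b c d : {b : Fin (I'.w * I.w) → M // (I.compUni I').Realize b}) :
    ((I.pull φ).relabel (fun p => p.1.map (fun j => finProdFinEquiv (j, p.2))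
      (Sum.map (fun j => finProdFinEquiv (j, p.2))
        (fun j => finProdFinEquiv (j, p.2))))).Realize (Sum.elim b.1 (Sum.elim c.1 d.1)) ↔
      φ.Realize (Sum.elim (he.domEquiv I' b).1
        (Sum.elim (he.domEquiv I' c).1 (he.domEquiv I' d).1)) := by
  rw [Formula.realize_relabel]
  convert he.realize_pull φ (Sum.elim (Interp.blocks I' b)
    (Sum.elim (Interp.blocks I' c) (Interp.blocks I' d))) using 2
  · funext p
    obtain ⟨j | j | j, i⟩ := p <;> rfl
  · funext p
    obtain p | p | p := p <;> rfl

end Composition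

theorem Interp.Models.exists_isIso {I : Interp} {x y : Str} (h : I.Models x y) :
    letI := strStructure x
    letI := strStructure y
    ∃ e : {a : Fin I.w → Fin (strLen x) // I.uni.Realize a} ≃ Fin (strLen y), I.IsIso e := by
  let := strStructure x
  let := strStructure y
  obtain ⟨e, hadd, hmul, hlt, hone, hzeroC, honeC⟩ := h
  refine ⟨e, ⟨?_, ?_⟩⟩
  · intro k f u v
    cases f with
    | zero =>
      rw [Fin.ext_iff, eq_comm]
      exact hzeroC u
    | one =>
      rw [Fin.ext_iff, eq_comm]
      exact honeC u
  · intro k R u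
    cases R with
    | one =>
      rw [Interp.relF, Formula.realize_relabel]
      exact hone (u 0)
    | lt =>
      rw [Interp.relF, Formula.realize_relabel]
      refine Iff.trans (iff_of_eq (congrArg _ (funext fun p => ?_))) (hlt (u 0) (u 1))
      cases p <;> rfl
    | add =>
      rw [Interp.relF, Formula.realize_relabel]
      refine Iff.trans (iff_of_eq (congrArg _ (funext fun p => ?_))) (hadd (u 0) (u 1) (u 2))
      obtain p | p | p := p <;> rfl
    | mul =>
      rw [Interp.relF, Formula.realize_relabel]
      refine Iff.trans (iff_of_eq (congrArg _ (funext fun p => ?_))) (hmul (u 0) (u 1) (u 2))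
      obtain p | p | p := p <;> rfl

theorem Interp.Models.comp {I I' : Interp} {x y z : Str} (h : I.Models x y)
    (h' : I'.Models y z) : (I.comp I').Models x z := by
  let := strStructure x
  let := strStructure y
  obtain ⟨e, he⟩ := h.exists_isIso
  obtain ⟨e', hadd, hmul, hlt, hone, hzeroC, honeC⟩ := h'
  refine ⟨(he.domEquiv I').trans e', ?_, ?_, ?_, ?_, ?_, ?_⟩
  · exact fun u v w => (he.realize_pull_blocks₃ I' I'.addF u v w).trans (hadd _ _ _)
  · exact fun u v w => (he.realize_pull_blocks₃ I' I'.mulF u v w).trans (hmul _ _ _)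
  · exact fun u v => (he.realize_pull_blocks₂ I' I'.ltF u v).trans (hlt _ _)
  · exact fun u => (he.realize_pull_blocks I' I'.oneR u).trans (hone _)
  · exact fun u => (he.realize_pull_blocks I' I'.zeroC u).trans (hzeroC _)
  · exact fun u => (he.realize_pull_blocks I' I'.oneC u).trans (honeC _)

/-- Every computable function is bounded by a monotone computable function. -/
theorem exists_computable_monotone_ge {h : ℕ → ℕ} (hh : Computable h) :
    ∃ g : ℕ → ℕ, Computable g ∧ Monotone g ∧ ∀ n, h n ≤ g n := by
  refine ⟨fun n => Nat.rec (h 0) (fun i m => max m (h (i + 1))) n, ?_,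
    monotone_nat_of_le_succ fun n => le_max_left _ _, fun n => ?_⟩
  · refine Computable.nat_rec (f := fun n : ℕ => n) (g := fun _ => h 0)
      (h := fun _ p => max p.2 (h (p.1 + 1))) Computable.id (Computable.const _) ?_
    exact Primrec.nat_max.to_comp.comp (Computable.snd.comp Computable.snd)
      (hh.comp (Computable.succ.comp (Computable.fst.comp Computable.snd)))
  · cases n with
    | zero => exact le_rfl
    | succ n => exact le_max_right _ _

theorem computable_pow_const (c : ℕ) : Computable fun n : ℕ => n ^ c := by
  induction c with
  | zero => simpa using Computable.const 1
  | succ c ih =>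
    exact (Primrec.nat_mul.to_comp.comp ih Computable.id).of_eq fun n => (pow_succ n c).symm

/-- **Lemma 3.3**: if `r` is `κ`-eventually definable, `r'` is `κ'`-eventually
    definable, `κ' ∘ r ≤ f ∘ κ` for a computable `f`, and `r` is honest, then
    `r' ∘ r` is `κ`-eventually definable. -/
theorem eventuallyDefinable_comp (κ κ' : Str → ℕ) (r r' : Str → Str) (f : ℕ → ℕ)
    (hκ : PolyTimeParam κ) (hκ' : PolyTimeParam κ')
    (hr : EventuallyDefinable κ r) (hr' : EventuallyDefinable κ' r')
    (hf : Computable f) (hbound : ∀ x : Str, κ' (r x) ≤ f (κ x))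
    (hhonest : Honest r) :
    EventuallyDefinable κ (r' ∘ r) := by
  obtain ⟨h, hh, I, hI⟩ := hr
  obtain ⟨h', hh', I', hI'⟩ := hr'
  obtain ⟨c, n₀, hc, hlen⟩ := hhonest
  obtain ⟨g, hg, hgmono, hle⟩ := exists_computable_monotone_ge hh'
  refine ⟨fun k => max (h k) (max n₀ (g (f k) ^ c)), ?_, I.comp I', fun x hx => ?_⟩
  · exact Primrec.nat_max.to_comp.comp hh (Primrec.nat_max.to_comp.comp (Computable.const _)
      ((computable_pow_const c).comp (hg.comp hf)))
  · simp only [max_le_iff] at hx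
    obtain ⟨hx, hn₀, hgx⟩ := hx
    have hrx : g (f (κ x)) ≤ (r x).length :=
      (Nat.pow_le_pow_iff_left hc.ne').1 (hgx.trans (hlen x hn₀))
    exact (hI x hx).comp
      (hI' (r x) (((hle _).trans (hgmono (hbound x))).trans hrx))

end PFW
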